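/- For every positive integer q, ∑_{l,m,n≥0} 1/((2l+1)(2m+1)(2n+1)^q (2l+2m+2n+3)) = (1/4) ∑_{a+b+c=q+3, a≥1, b≥1, c≥2} T(a, b, c) + (1/4) ∑_{j=2}^{q+1} T(1, q+2−j, j) + (1/4) T(1, 1, q+1). -/

import Mathlib

/-- The multiple T-value `T(k₁, …, k_r)`:
`2^r` times the sum over `0 < m₁ < ⋯ < m_r` with `m_i ≡ i (mod 2)`
of `1 / (m₁^{k₁} ⋯ m_r^{k_r})`. -/
noncomputable def MTV (k : List ℕ) : ℝ :=
  2 ^ k.length *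
    ∑' f : {f : Fin k.length → ℕ // StrictMono f ∧ ∀ i, f i % 2 = ((i : ℕ) + 1) % 2},
      ∏ i : Fin k.length, (1 : ℝ) / (f.1 i : ℝ) ^ k.get i

namespace TripleT

/-- real variable attached to an index -/
noncomputable def o (n : ℕ) : ℝ := 2 * (n : ℝ) + 1

lemma o_one_le (n : ℕ) : 1 ≤ o n := by
  unfold o
  have : (0 : ℝ) ≤ n := Nat.cast_nonneg n
  linarith

lemma o_pos (n : ℕ) : 0 < o n := lt_of_lt_of_le one_pos (o_one_le n)

/-- The dominating function. -/
noncomputable def D (p : ℕ × ℕ × ℕ) : ℝ :=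
  1 / (o p.1 * o p.2.1 * o p.2.2 * (o p.1 + o p.2.1 + o p.2.2))

/-- The summand of the multiple T-value. -/
noncomputable def G (a b c : ℕ) (p : ℕ × ℕ × ℕ) : ℝ :=
  1 / (o p.1 ^ a * (o p.1 + o p.2.1) ^ b * (o p.1 + o p.2.1 + o p.2.2) ^ c)

/-- The intermediate summand. -/
noncomputable def C (i c : ℕ) (p : ℕ × ℕ × ℕ) : ℝ :=
  1 / (o p.1 * o p.2.2 ^ i * (o p.1 + o p.2.1 + o p.2.2) ^ c)

lemma summable_o : Summable (fun n : ℕ => (o n) ^ (-(4/3) : ℝ)) := by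
  have h : Summable (fun n : ℕ => ((n + 1 : ℕ) : ℝ) ^ (-(4/3) : ℝ)) :=
    (summable_nat_add_iff 1).2 (Real.summable_nat_rpow.2 (by norm_num))
  refine Summable.of_nonneg_of_le (fun n => (Real.rpow_pos_of_pos (o_pos n) _).le) (fun n => ?_) h
  apply Real.rpow_le_rpow_of_nonpos
  · positivity
  · unfold o; push_cast
    have : (0 : ℝ) ≤ n := Nat.cast_nonneg n
    linarith
  · norm_num

lemma summable_D : Summable D := by
  have h0 := summable_o
  have nn : ∀ n, 0 ≤ (o n) ^ (-(4/3) : ℝ) := fun n => (Real.rpow_pos_of_pos (o_pos n) _).le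
  have h1 := h0.mul_of_nonneg h0 nn nn
  have h2 := h0.mul_of_nonneg h1 nn (fun p => mul_nonneg (nn _) (nn _))
  refine Summable.of_nonneg_of_le (fun p => ?_) (fun p => ?_) h2
  · have := o_pos p.1; have := o_pos p.2.1; have := o_pos p.2.2
    unfold D; positivity
  · obtain ⟨l, m, n⟩ := p
    have hx := o_pos l; have hy := o_pos m; have hz := o_pos n
    simp only [D]
    generalize o l = x at *
    generalize o m = y at *
    generalize o n = z at *
    have e : ∀ t : ℝ, 0 < t → t ^ (-(4/3) : ℝ) = 1 / (t * t ^ (1/3 : ℝ)) := by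
      intro t ht
      rw [Real.rpow_neg ht.le, show (4/3 : ℝ) = 1 + 1/3 by norm_num, Real.rpow_add ht,
        Real.rpow_one]; norm_num
    rw [e x hx, e y hy, e z hz]
    have hw : x ^ (1/3 : ℝ) * (y ^ (1/3 : ℝ) * z ^ (1/3 : ℝ)) ≤ x + y + z := by
      have e2 : (x + y + z) = (x+y+z) ^ (1/3 : ℝ) * ((x+y+z) ^ (1/3 : ℝ) * (x+y+z) ^ (1/3 : ℝ)) := by
        have hp : 0 < x + y + z := by positivity
        rw [← Real.rpow_add hp, ← Real.rpow_add hp]; norm_num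
      rw [e2]
      gcongr <;> linarith
    have e3 : 1 / (x * x ^ (1/3 : ℝ)) * (1 / (y * y ^ (1/3 : ℝ)) * (1 / (z * z ^ (1/3 : ℝ))))
        = 1 / (x * y * z * (x ^ (1/3 : ℝ) * (y ^ (1/3 : ℝ) * z ^ (1/3 : ℝ)))) := by
      rw [one_div_mul_one_div, one_div_mul_one_div]; congr 1; ring
    rw [e3]
    have := Real.rpow_pos_of_pos hx (1/3)
    have := Real.rpow_pos_of_pos hy (1/3)
    have := Real.rpow_pos_of_pos hz (1/3)
    apply one_div_le_one_div_of_le (by positivity)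
    gcongr

lemma summable_G (a b c : ℕ) (ha : 1 ≤ a) (hb : 1 ≤ b) (hc : 2 ≤ c) : Summable (G a b c) := by
  refine Summable.of_nonneg_of_le (fun p => ?_) (fun p => ?_) summable_D
  · have := o_pos p.1; have := o_pos p.2.1; have := o_pos p.2.2
    unfold G; positivity
  · obtain ⟨l, m, n⟩ := p
    have hx := o_one_le l; have hy := o_one_le m; have hz := o_one_le n
    simp only [D, G]
    generalize o l = x at *
    generalize o m = y at *
    generalize o n = z at *
    apply one_div_le_one_div_of_le (by positivity)
    have h1 : x ≤ x ^ a := le_self_pow₀ hx (by omega)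
    have h2 : y ≤ (x + y) ^ b := le_trans (by linarith) (le_self_pow₀ (a := x + y) (by linarith) (by omega))
    have h3 : z * (x + y + z) ≤ (x + y + z) ^ c := by
      refine le_trans ?_ (pow_le_pow_right₀ (a := x + y + z) (by linarith) hc)
      rw [sq]; gcongr; linarith
    calc x * y * z * (x + y + z) = x * y * (z * (x + y + z)) := by ring
      _ ≤ _ := by gcongr

lemma summable_C (i c : ℕ) (hi : 1 ≤ i) (hc : 2 ≤ c) : Summable (C i c) := by
  refine Summable.of_nonneg_of_le (fun p => ?_) (fun p => ?_) summable_D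
  · have := o_pos p.1; have := o_pos p.2.1; have := o_pos p.2.2
    unfold C; positivity
  · obtain ⟨l, m, n⟩ := p
    have hx := o_one_le l; have hy := o_one_le m; have hz := o_one_le n
    simp only [D, C]
    generalize o l = x at *
    generalize o m = y at *
    generalize o n = z at *
    apply one_div_le_one_div_of_le (by positivity)
    have h1 : z ≤ z ^ i := le_self_pow₀ hz (by omega)
    have h3 : y * (x + y + z) ≤ (x + y + z) ^ c := by
      refine le_trans ?_ (pow_le_pow_right₀ (a := x + y + z) (by linarith) hc)
      rw [sq]; gcongr; linarith
    calc x * y * z * (x + y + z) = x * z * (y * (x + y + z)) := by ring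
      _ ≤ _ := by gcongr

lemma pf (v z : ℝ) (hv : 0 < v) (hz : 0 < z) (n : ℕ) :
    1 / (v * z ^ n) = 1 / (v * (v + z) ^ n)
      + ∑ i ∈ Finset.range n, 1 / (z ^ (i + 1) * (v + z) ^ (n - i)) := by
  induction n with
  | zero => simp
  | succ n ih =>
    have hw : 0 < v + z := by positivity
    have e : ∑ i ∈ Finset.range n, 1 / (z ^ (i + 1) * (v + z) ^ (n + 1 - i))
        = (∑ i ∈ Finset.range n, 1 / (z ^ (i + 1) * (v + z) ^ (n - i))) * (1 / (v + z)) := by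
      rw [Finset.sum_mul]
      apply Finset.sum_congr rfl
      intro i hi
      have : n + 1 - i = (n - i) + 1 := by have := Finset.mem_range.1 hi; omega
      rw [this, one_div_mul_one_div, pow_succ (v + z), mul_assoc]
    rw [Finset.sum_range_succ, e]
    have ih' : ∑ i ∈ Finset.range n, 1 / (z ^ (i + 1) * (v + z) ^ (n - i))
      = 1 / (v * z ^ n) - 1 / (v * (v + z) ^ n) := by linarith
    rw [ih', show n + 1 - n = 1 by omega]
    field_simp
    ring

/-- the bijection behind the T-values -/
def φ (p : ℕ × ℕ × ℕ) :
    {f : Fin 3 → ℕ // StrictMono f ∧ ∀ i, f i % 2 = ((i : ℕ) + 1) % 2} :=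
  ⟨![2 * p.1 + 1, 2 * p.1 + 2 * p.2.1 + 2, 2 * p.1 + 2 * p.2.1 + 2 * p.2.2 + 3], by
    constructor
    · rw [Fin.strictMono_iff_lt_succ]
      intro i
      fin_cases i <;> simp <;> omega
    · intro i
      fin_cases i <;> simp <;> omega⟩

lemma φ_bij : Function.Bijective φ := by
  constructor
  · rintro ⟨l, m, n⟩ ⟨l', m', n'⟩ h
    have h := congrArg Subtype.val h
    have h0 := congrFun h 0
    have h1 := congrFun h 1
    have h2 := congrFun h 2
    simp [φ] at h0 h1 h2
    simp only [Prod.mk.injEq]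
    omega
  · rintro ⟨f, hf, hp⟩
    have a0 := hp 0
    have a1 := hp 1
    have a2 := hp 2
    have b1 : f 0 < f 1 := hf (by decide)
    have b2 : f 1 < f 2 := hf (by decide)
    simp at a0 a1 a2
    refine ⟨((f 0 - 1) / 2, (f 1 - f 0 - 1) / 2, (f 2 - f 1 - 1) / 2), ?_⟩
    apply Subtype.ext
    funext i
    fin_cases i <;> simp [φ] <;> omega

lemma MTV_eq (a b c : ℕ) : MTV [a, b, c] = 8 * ∑' p, G a b c p := by
  have h : MTV [a, b, c] = 2 ^ 3 *
    ∑' f : {f : Fin 3 → ℕ // StrictMono f ∧ ∀ i, f i % 2 = ((i : ℕ) + 1) % 2},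
      ∏ i : Fin 3, (1 : ℝ) / (f.1 i : ℝ) ^ ([a, b, c].get i) := rfl
  rw [h, ← (Equiv.ofBijective φ φ_bij).tsum_eq]
  norm_num
  apply tsum_congr
  intro p
  rw [Fin.prod_univ_three]
  simp only [φ, G, o, Equiv.ofBijective_apply]
  simp
  rw [show (2 * (p.1 : ℝ) + 1 + (2 * p.2.1 + 1)) = 2 * p.1 + 2 * p.2.1 + 2 by ring,
    show (2 * (p.1 : ℝ) + 2 * p.2.1 + 2 + (2 * p.2.2 + 1)) = 2 * p.1 + 2 * p.2.1 + 2 * p.2.2 + 3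
      by ring]

/-- swap of the first two coordinates -/
def s12 : ℕ × ℕ × ℕ ≃ ℕ × ℕ × ℕ where
  toFun p := (p.2.1, p.1, p.2.2)
  invFun p := (p.2.1, p.1, p.2.2)
  left_inv _ := rfl
  right_inv _ := rfl

/-- swap of the last two coordinates -/
def s23 : ℕ × ℕ × ℕ ≃ ℕ × ℕ × ℕ where
  toFun p := (p.1, p.2.2, p.2.1)
  invFun p := (p.1, p.2.2, p.2.1)
  left_inv _ := rfl
  right_inv _ := rfl

/-- cyclic rotation -/
def rot : ℕ × ℕ × ℕ ≃ ℕ × ℕ × ℕ where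
  toFun p := (p.2.2, p.1, p.2.1)
  invFun p := (p.2.1, p.2.2, p.1)
  left_inv _ := rfl
  right_inv _ := rfl

lemma C_point (i c : ℕ) (p : ℕ × ℕ × ℕ) :
    C i c p = G 1 i c (s23 p) + ∑ k ∈ Finset.range i, G (k + 1) (i - k) c (rot p) := by
  obtain ⟨l, m, n⟩ := p
  have hx := o_pos l; have hy := o_pos m; have hz := o_pos n
  simp only [C, G, s23, rot, Equiv.coe_fn_mk]
  generalize o l = x at *
  generalize o m = y at *
  generalize o n = z at *
  have h := pf x z hx hz i
  rw [show x + z + y = x + y + z by ring, show z + x + y = x + y + z by ring,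
    show z + x = x + z by ring, pow_one, ← one_div_mul_one_div, h, add_mul, Finset.sum_mul,
    one_div_mul_one_div]
  congr 1
  apply Finset.sum_congr rfl
  intro k _
  rw [one_div_mul_one_div]

lemma C_sum (i c : ℕ) (hi : 1 ≤ i) (hc : 2 ≤ c) :
    ∑' p, C i c p = ∑' p, G 1 i c p + ∑ k ∈ Finset.range i, ∑' p, G (k + 1) (i - k) c p := by
  have hs : ∀ k ∈ Finset.range i, Summable (fun p => G (k + 1) (i - k) c (rot p)) := by
    intro k hk
    have := Finset.mem_range.1 hk
    exact rot.summable_iff.2 (summable_G _ _ _ (by omega) (by omega) hc)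
  have h0 : Summable (fun p => G 1 i c (s23 p)) :=
    s23.summable_iff.2 (summable_G _ _ _ le_rfl hi hc)
  rw [tsum_congr (C_point i c), Summable.tsum_add h0 (summable_sum hs),
    Summable.tsum_finsetSum hs, s23.tsum_eq]
  congr 1
  apply Finset.sum_congr rfl
  intro k _
  exact rot.tsum_eq (G (k + 1) (i - k) c)

/-- The summand after the first partial fraction step. -/
noncomputable def B (q : ℕ) (p : ℕ × ℕ × ℕ) : ℝ :=
  1 / (o p.1 * (o p.1 + o p.2.1) * o p.2.2 ^ q * (o p.1 + o p.2.1 + o p.2.2))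

lemma B_point (q : ℕ) (p : ℕ × ℕ × ℕ) :
    B q p = G 1 1 (q + 1) p + ∑ i ∈ Finset.range q, C (i + 1) (q + 1 - i) p := by
  obtain ⟨l, m, n⟩ := p
  have hx := o_pos l; have hy := o_pos m; have hz := o_pos n
  simp only [B, C, G]
  generalize o l = x at *
  generalize o m = y at *
  generalize o n = z at *
  have h := pf (x + y) z (by positivity) hz q
  have e : 1 / (x * (x + y) * z ^ q * (x + y + z))
      = 1 / ((x + y) * z ^ q) * (1 / (x * (x + y + z))) := by
    rw [one_div_mul_one_div]; congr 1; ring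
  rw [e, h, add_mul, Finset.sum_mul, one_div_mul_one_div]
  congr 1
  · congr 1; ring
  apply Finset.sum_congr rfl
  intro k hk
  have := Finset.mem_range.1 hk
  rw [one_div_mul_one_div, show q + 1 - k = (q - k) + 1 by omega]
  congr 1; ring

lemma summable_CC (q : ℕ) : ∀ i ∈ Finset.range q, Summable (C (i + 1) (q + 1 - i)) := by
  intro i hi
  have := Finset.mem_range.1 hi
  exact summable_C _ _ (by omega) (by omega)

lemma summable_B (q : ℕ) (hq : 1 ≤ q) : Summable (B q) := by
  rw [funext (B_point q)]
  exact (summable_G _ _ _ le_rfl le_rfl (by omega)).add (summable_sum (summable_CC q))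

lemma B_sum (q : ℕ) (hq : 1 ≤ q) :
    ∑' p, B q p = ∑' p, G 1 1 (q + 1) p
      + ∑ i ∈ Finset.range q, (∑' p, G 1 (i + 1) (q + 1 - i) p
        + ∑ k ∈ Finset.range (i + 1), ∑' p, G (k + 1) (i + 1 - k) (q + 1 - i) p) := by
  rw [tsum_congr (B_point q), Summable.tsum_add (summable_G _ _ _ le_rfl le_rfl (by omega))
    (summable_sum (summable_CC q)), Summable.tsum_finsetSum (summable_CC q)]
  congr 1
  apply Finset.sum_congr rfl
  intro i hi
  have := Finset.mem_range.1 hi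
  exact C_sum _ _ (by omega) (by omega)

lemma A_point (q : ℕ) (p : ℕ × ℕ × ℕ) :
    1 / ((2 * (p.1 : ℝ) + 1) * (2 * (p.2.1 : ℝ) + 1) * (2 * (p.2.2 : ℝ) + 1) ^ q
          * (2 * (p.1 : ℝ) + 2 * (p.2.1 : ℝ) + 2 * (p.2.2 : ℝ) + 3)) = B q p + B q (s12 p) := by
  obtain ⟨l, m, n⟩ := p
  have hx := o_pos l; have hy := o_pos m; have hz := o_pos n
  have e : 2 * (l : ℝ) + 2 * (m : ℝ) + 2 * (n : ℝ) + 3 = o l + o m + o n := by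
    unfold o; ring
  simp only [B, s12, Equiv.coe_fn_mk]
  rw [e]
  change 1 / (o l * o m * o n ^ q * (o l + o m + o n)) = _
  generalize o l = x at *
  generalize o m = y at *
  generalize o n = z at *
  rw [add_comm y x]
  field_simp
  ring

end TripleT

open TripleT

/-- **Lemma.** For every positive integer `q`,
`∑_{l,m,n≥0} 1/((2l+1)(2m+1)(2n+1)^q (2l+2m+2n+3))
  = (1/4) ∑_{a+b+c=q+3, a,b≥1, c≥2} T(a,b,c)
    + (1/4) ∑_{j=2}^{q+1} T(1, q+2−j, j) + (1/4) T(1,1,q+1)`. -/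
theorem triple_sum_I1 (q : ℕ) (hq : 1 ≤ q) :
    (∑' p : ℕ × ℕ × ℕ,
        1 / ((2 * (p.1 : ℝ) + 1) * (2 * (p.2.1 : ℝ) + 1) * (2 * (p.2.2 : ℝ) + 1) ^ q
          * (2 * (p.1 : ℝ) + 2 * (p.2.1 : ℝ) + 2 * (p.2.2 : ℝ) + 3)))
      = 1 / 4 * (∑ p ∈ (Finset.Icc 1 (q + 3) ×ˢ Finset.Icc 1 (q + 3) ×ˢ
            Finset.Icc 2 (q + 3)).filter (fun p => p.1 + p.2.1 + p.2.2 = q + 3),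
            MTV [p.1, p.2.1, p.2.2])
        + 1 / 4 * (∑ j ∈ Finset.Icc 2 (q + 1), MTV [1, q + 2 - j, j])
        + 1 / 4 * MTV [1, 1, q + 1] := by
  have h0 : Summable (fun p => B q (s12 p)) := s12.summable_iff.2 (summable_B q hq)
  rw [tsum_congr (A_point q), Summable.tsum_add (summable_B q hq) h0, s12.tsum_eq (B q), B_sum q hq]
  have h1 : ∑ j ∈ Finset.Icc 2 (q + 1), MTV [1, q + 2 - j, j]
      = ∑ i ∈ Finset.range q, MTV [1, i + 1, q + 1 - i] := by
    refine Finset.sum_nbij' (fun j => q + 1 - j) (fun i => q + 1 - i) ?_ ?_ ?_ ?_ ?_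
    · intro j hj; simp only [Finset.mem_Icc, Finset.mem_range] at *; omega
    · intro j hj; simp only [Finset.mem_Icc, Finset.mem_range] at *; omega
    · intro j hj; simp only [Finset.mem_Icc] at *; omega
    · intro j hj; simp only [Finset.mem_range] at *; omega
    · intro j hj
      simp only [Finset.mem_Icc] at hj
      rw [show q + 1 - j + 1 = q + 2 - j by omega, show q + 1 - (q + 1 - j) = j by omega]
  have h2 : ∑ p ∈ (Finset.Icc 1 (q + 3) ×ˢ Finset.Icc 1 (q + 3) ×ˢ
            Finset.Icc 2 (q + 3)).filter (fun p => p.1 + p.2.1 + p.2.2 = q + 3),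
            MTV [p.1, p.2.1, p.2.2]
      = ∑ i ∈ Finset.range q, ∑ k ∈ Finset.range (i + 1), MTV [k + 1, i + 1 - k, q + 1 - i] := by
    rw [Finset.sum_sigma']
    refine Finset.sum_nbij' (fun p => ⟨q + 1 - p.2.2, p.1 - 1⟩)
      (fun x => (x.2 + 1, x.1 + 1 - x.2, q + 1 - x.1)) ?_ ?_ ?_ ?_ ?_
    · rintro ⟨a, b, c⟩ h
      simp only [Finset.mem_filter, Finset.mem_product, Finset.mem_Icc, Finset.mem_sigma,
        Finset.mem_range] at *
      omega
    · rintro ⟨i, k⟩ h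
      simp only [Finset.mem_filter, Finset.mem_product, Finset.mem_Icc, Finset.mem_sigma,
        Finset.mem_range] at *
      omega
    · rintro ⟨a, b, c⟩ h
      simp only [Finset.mem_filter, Finset.mem_product, Finset.mem_Icc, Prod.mk.injEq] at *
      omega
    · rintro ⟨i, k⟩ h
      simp only [Finset.mem_sigma, Finset.mem_range] at h
      have e1 : q + 1 - (q + 1 - i) = i := by omega
      simp [e1]
    · rintro ⟨a, b, c⟩ h
      simp only [Finset.mem_filter, Finset.mem_product, Finset.mem_Icc] at h
      simp only
      rw [show a - 1 + 1 = a by omega, show q + 1 - c + 1 - (a - 1) = b by omega,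
        show q + 1 - (q + 1 - c) = c by omega]
  rw [h1, h2]
  simp only [MTV_eq, Finset.sum_add_distrib, ← Finset.mul_sum]
  ring
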